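/- There exists a 2-(24,4,1) packing with 42 blocks whose leave is a vertex-disjoint union of five cycles of length 3, one cycle of length 4, and one cycle of length 5, covering all 24 points (leave type 3^5 4^1 5^1). -/

import Mathlib

/-!
The packing is explicit, with its points numbered so that each cycle of the leave occupies
consecutive numbers: the triangles are `{0, 1, 2}, …, {12, 13, 14}`, the 4-cycle runs through
`15, …, 18` and the 5-cycle through `19, …, 23`. Since `42 * 6 = 276 - 24`, every packing with 42
blocks leaves exactly 24 pairs uncovered. So it suffices to check that two blocks never share two
points and that the 24 edges of the cycles are uncovered; no other pair can then be.
-/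

/-- A 2-(24,4,1) packing: a collection of 4-element blocks on 24 points such that
every pair of distinct points lies in at most one block. -/
def IsPacking (B : Finset (Finset (Fin 24))) : Prop :=
  (∀ b ∈ B, b.card = 4) ∧
  ∀ p q : Fin 24, p ≠ q → ∀ b₁ ∈ B, ∀ b₂ ∈ B,
    p ∈ b₁ → q ∈ b₁ → p ∈ b₂ → q ∈ b₂ → b₁ = b₂

/-- Adjacency in the leave of a packing: the pair of distinct points is covered by no block. -/
def LeaveAdj (B : Finset (Finset (Fin 24))) (p q : Fin 24) : Prop :=
  p ≠ q ∧ ∀ b ∈ B, ¬ (p ∈ b ∧ q ∈ b)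

/-- The leave of the packing `B` is a vertex-disjoint union of cycles whose lengths are
given by the list `L`, covering all 24 points. -/
def LeaveIsCycleType (B : Finset (Finset (Fin 24))) (L : List ℕ) : Prop :=
  ∃ f : (i : Fin L.length) → ZMod (L.get i) → Fin 24,
    Function.Bijective (fun x : Σ i : Fin L.length, ZMod (L.get i) => f x.1 x.2) ∧
    ∀ p q : Fin 24, LeaveAdj B p q ↔
      ∃ i k, (p = f i k ∧ q = f i (k + 1)) ∨ (q = f i k ∧ p = f i (k + 1))

theorem isPacking_of_card_inter_le_one {B : Finset (Finset (Fin 24))}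
    (h_card : ∀ b ∈ B, b.card = 4)
    (h_inter : (B : Set (Finset (Fin 24))).Pairwise fun b₁ b₂ => (b₁ ∩ b₂).card ≤ 1) :
    IsPacking B := by
  refine ⟨h_card, fun p q hpq b₁ hb₁ b₂ hb₂ hp₁ hq₁ hp₂ hq₂ => ?_⟩
  by_contra hne
  exact hpq <| Finset.card_le_one.mp (h_inter hb₁ hb₂ hne)
    p (Finset.mem_inter.mpr ⟨hp₁, hp₂⟩) q (Finset.mem_inter.mpr ⟨hq₁, hq₂⟩)

/-- The edges of the graph in which every point is joined to its image under `σ`, each counted as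
two ordered pairs. -/
def successorPairs {α : Type*} [Fintype α] [DecidableEq α] (σ : α → α) : Finset (α × α) :=
  Finset.univ.image (fun p => (p, σ p)) ∪ Finset.univ.image fun p => (σ p, p)

section SuccessorPairs

variable {α : Type*} [Fintype α] [DecidableEq α] {σ : α → α}

theorem mem_successorPairs {p q : α} : (p, q) ∈ successorPairs σ ↔ q = σ p ∨ p = σ q := by
  simp [successorPairs, eq_comm]

theorem card_successorPairs (h_ne : ∀ p, σ (σ p) ≠ p) :
    (successorPairs σ).card = 2 * Fintype.card α := by
  have h_disjoint : Disjoint (Finset.univ.image fun p => (p, σ p))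
      (Finset.univ.image fun p => (σ p, p)) := by
    simp only [Finset.disjoint_left, Finset.mem_image, Finset.mem_univ, true_and]
    rintro _ ⟨p, rfl⟩ ⟨q, hq⟩
    obtain ⟨hp, hq⟩ := Prod.mk.inj hq
    exact h_ne p (by rw [← hq, hp])
  rw [successorPairs, Finset.card_union_of_disjoint h_disjoint,
    Finset.card_image_of_injective _ fun _ _ h => congrArg Prod.fst h,
    Finset.card_image_of_injective _ fun _ _ h => congrArg Prod.snd h, Finset.card_univ, two_mul]

end SuccessorPairs

/-- The edges of the leave of `B`, each counted as two ordered pairs. -/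
def leavePairs (B : Finset (Finset (Fin 24))) : Finset (Fin 24 × Fin 24) :=
  Finset.univ.offDiag \ B.biUnion Finset.offDiag

theorem mem_leavePairs {B : Finset (Finset (Fin 24))} {p q : Fin 24} :
    (p, q) ∈ leavePairs B ↔ LeaveAdj B p q := by
  simp only [leavePairs, LeaveAdj, Finset.mem_sdiff, Finset.mem_biUnion, Finset.mem_offDiag,
    Finset.mem_univ, true_and]
  grind

theorem LeaveAdj.symm {B : Finset (Finset (Fin 24))} {p q : Fin 24} (h : LeaveAdj B p q) :
    LeaveAdj B q p :=
  ⟨h.1.symm, fun b hb hqp => h.2 b hb hqp.symm⟩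

namespace IsPacking

variable {B : Finset (Finset (Fin 24))}

theorem card_leavePairs_add_card (hB : IsPacking B) :
    (leavePairs B).card + 12 * B.card = 24 * 23 := by
  have h_disjoint : (B : Set (Finset (Fin 24))).PairwiseDisjoint Finset.offDiag := by
    refine fun b₁ hb₁ b₂ hb₂ hne => Finset.disjoint_left.mpr fun ⟨p, q⟩ h₁ h₂ => hne ?_
    obtain ⟨hp₁, hq₁, hpq⟩ := Finset.mem_offDiag.mp h₁
    obtain ⟨hp₂, hq₂, -⟩ := Finset.mem_offDiag.mp h₂
    exact hB.2 p q hpq b₁ hb₁ b₂ hb₂ hp₁ hq₁ hp₂ hq₂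
  have h_block : ∀ b ∈ B, b.offDiag.card = 12 := fun b hb => by
    rw [Finset.offDiag_card, hB.1 b hb]
  have h_covered : (B.biUnion Finset.offDiag).card = 12 * B.card := by
    rw [Finset.card_biUnion h_disjoint, Finset.sum_const_nat h_block, mul_comm]
  have h_subset : B.biUnion Finset.offDiag ⊆ Finset.univ.offDiag :=
    Finset.biUnion_subset.mpr fun b _ => Finset.offDiag_mono b.subset_univ
  rw [leavePairs, ← h_covered, Finset.card_sdiff_add_card_eq_card h_subset, Finset.offDiag_card,
    Finset.card_univ, Fintype.card_fin]

theorem leaveAdj_iff_of_card_eq (hB : IsPacking B) (h_card : B.card = 42) {σ : Fin 24 → Fin 24}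
    (h_adj : ∀ p, LeaveAdj B p (σ p)) (h_ne : ∀ p, σ (σ p) ≠ p) {p q : Fin 24} :
    LeaveAdj B p q ↔ q = σ p ∨ p = σ q := by
  have h_subset : successorPairs σ ⊆ leavePairs B := fun ⟨a, b⟩ h => by
    rw [mem_leavePairs]
    rcases mem_successorPairs.mp h with rfl | rfl
    exacts [h_adj a, (h_adj b).symm]
  have h_eq : successorPairs σ = leavePairs B := by
    refine Finset.eq_of_subset_of_card_le h_subset ?_
    have h_count := hB.card_leavePairs_add_card
    rw [card_successorPairs h_ne, Fintype.card_fin]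
    omega
  rw [← mem_leavePairs, ← h_eq, mem_successorPairs]

end IsPacking

/-- The vertices of the disjoint union of cycles whose lengths are listed by `L`: a cycle together
with a position on it. -/
abbrev CycleVertex (L : List ℕ) : Type :=
  Σ i : Fin L.length, ZMod (L.get i)

namespace CycleVertex

variable {L : List ℕ}

/-- The vertex that follows `x` on its cycle. -/
def next (x : CycleVertex L) : CycleVertex L :=
  ⟨x.1, x.2 + 1⟩

theorem eq_next_iff {x y : CycleVertex L} :
    y = x.next ↔ ∃ i k, x = ⟨i, k⟩ ∧ y = ⟨i, k + 1⟩ := by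
  refine ⟨fun h => ⟨x.1, x.2, rfl, h⟩, ?_⟩
  rintro ⟨i, k, rfl, rfl⟩
  rfl

theorem next_next_ne (hL : ∀ n ∈ L, 3 ≤ n) (x : CycleVertex L) : x.next.next ≠ x := by
  obtain ⟨i, k⟩ := x
  intro h
  have h_two : ((2 : ℕ) : ZMod (L.get i)) = 0 := by
    have h_add : k + 1 + 1 = k := eq_of_heq (Sigma.mk.inj h).2
    rwa [add_assoc, one_add_one_eq_two, add_eq_left] at h_add
  have h_le := Nat.le_of_dvd two_pos ((ZMod.natCast_eq_zero_iff _ _).mp h_two)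
  have h_len := hL _ (L.get_mem i)
  omega

/-- The numbering of the vertices in which each cycle occupies consecutive numbers, the cycles
following one another in the order of `L`. -/
def numbering (L : List ℕ) [∀ i : Fin L.length, NeZero (L.get i)] :
    CycleVertex L ≃ Fin (∑ i : Fin L.length, L.get i) :=
  (Equiv.sigmaCongrRight fun i => (ZMod.finEquiv (L.get i)).symm.toEquiv).trans finSigmaFinEquiv

end CycleVertex

theorem leaveIsCycleType_of_equiv {B : Finset (Finset (Fin 24))} (hB : IsPacking B)
    (h_card : B.card = 42) {L : List ℕ} (hL : ∀ n ∈ L, 3 ≤ n) (e : CycleVertex L ≃ Fin 24)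
    (h_adj : ∀ x, LeaveAdj B (e x) (e x.next)) : LeaveIsCycleType B L := by
  have h_leave (x y : CycleVertex L) : LeaveAdj B (e x) (e y) ↔ y = x.next ∨ x = y.next := by
    rw [hB.leaveAdj_iff_of_card_eq h_card (σ := fun p => e (e.symm p).next)
      (fun p => by simpa using h_adj (e.symm p))
      (fun p => by simpa [← e.eq_symm_apply] using CycleVertex.next_next_ne hL (e.symm p))]
    simp only [e.symm_apply_apply, e.apply_eq_iff_eq]
  refine ⟨fun i k => e ⟨i, k⟩, e.bijective, e.forall_congr_right.mp fun x =>
    e.forall_congr_right.mp fun y => ?_⟩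
  simp only [h_leave, CycleVertex.eq_next_iff, e.apply_eq_iff_eq, exists_or]

/-- The 42 blocks of the packing, as lists of points. Lists, unlike `Finset`s of `Finset`s, are
evaluated by the kernel without removal of duplicates. -/
def blockList : List (List (Fin 24)) :=
  [[0, 3, 7, 14], [0, 4, 9, 22], [0, 5, 11, 19], [0, 6, 13, 21], [0, 8, 12, 20],
   [0, 10, 16, 18], [0, 15, 17, 23], [1, 3, 16, 20], [1, 4, 6, 17], [1, 5, 8, 10],
   [1, 7, 15, 22], [1, 9, 14, 23], [1, 11, 13, 18], [1, 12, 19, 21], [2, 3, 18, 21],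
   [2, 4, 10, 13], [2, 5, 12, 15], [2, 6, 20, 22], [2, 7, 11, 23], [2, 8, 9, 16],
   [2, 14, 17, 19], [3, 6, 11, 15], [3, 8, 13, 23], [3, 9, 12, 17], [3, 10, 19, 22],
   [4, 7, 12, 18], [4, 8, 15, 19], [4, 11, 14, 20], [4, 16, 21, 23], [5, 6, 14, 16],
   [5, 7, 9, 21], [5, 13, 17, 22], [5, 18, 20, 23], [6, 9, 18, 19], [6, 10, 12, 23],
   [7, 10, 17, 20], [7, 13, 16, 19], [8, 11, 17, 21], [8, 14, 18, 22], [9, 13, 15, 20],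
   [10, 14, 15, 21], [11, 12, 16, 22]]

/-- The packing formed by the blocks in `blockList`. -/
def packingBlocks : Finset (Finset (Fin 24)) :=
  (blockList.map List.toFinset).toFinset

theorem mem_packingBlocks {b : Finset (Fin 24)} :
    b ∈ packingBlocks ↔ ∃ l ∈ blockList, l.toFinset = b := by
  rw [packingBlocks, List.mem_toFinset, List.mem_map]

theorem card_of_mem_packingBlocks : ∀ b ∈ packingBlocks, b.card = 4 := by
  have h : ∀ l ∈ blockList, l.toFinset.card = 4 := by decide +kernel
  simpa only [mem_packingBlocks, forall_exists_index, and_imp, forall_apply_eq_imp_iff₂] using h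

theorem blockList_pairwise_card_inter_le_one :
    (blockList.map List.toFinset).Pairwise fun b₁ b₂ => (b₁ ∩ b₂).card ≤ 1 := by
  have h : blockList.Pairwise fun l₁ l₂ => (l₁ ∩ l₂).length ≤ 1 := by decide +kernel
  refine List.pairwise_map.mpr <| h.imp fun {l₁ l₂} h_le => ?_
  rw [← List.toFinset_inter]
  exact (List.toFinset_card_le _).trans h_le

theorem isPacking_packingBlocks : IsPacking packingBlocks := by
  refine isPacking_of_card_inter_le_one card_of_mem_packingBlocks fun b₁ hb₁ b₂ hb₂ hne => ?_
  have : Std.Symm fun b₁ b₂ : Finset (Fin 24) => (b₁ ∩ b₂).card ≤ 1 :=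
    ⟨fun b₁ b₂ h => Finset.inter_comm b₁ b₂ ▸ h⟩
  exact blockList_pairwise_card_inter_le_one.forall (List.mem_toFinset.mp hb₁)
    (List.mem_toFinset.mp hb₂) hne

theorem card_packingBlocks : packingBlocks.card = 42 := by
  have h_nodup : (blockList.map List.toFinset).Nodup := by
    refine blockList_pairwise_card_inter_le_one.imp_of_mem fun {b b'} hb _ h_le h_eq => ?_
    rw [← h_eq, Finset.inter_self, card_of_mem_packingBlocks b (List.mem_toFinset.mpr hb)] at h_le
    omega
  rw [packingBlocks, List.toFinset_card_of_nodup h_nodup, List.length_map]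
  rfl

/-- The lengths of the cycles in the leave of `packingBlocks`. -/
abbrev leaveCycleLengths : List ℕ :=
  [3, 3, 3, 3, 3, 4, 5]

instance neZero_leaveCycleLengths (i : Fin leaveCycleLengths.length) :
    NeZero (leaveCycleLengths.get i) :=
  ⟨by revert i; decide⟩

/-- The points of the packing as vertices of the cycles of its leave. -/
def leaveVertexEquiv : CycleVertex leaveCycleLengths ≃ Fin 24 :=
  (CycleVertex.numbering leaveCycleLengths).trans (finCongr (by decide))

theorem leaveAdj_packingBlocks_next (x : CycleVertex leaveCycleLengths) :
    LeaveAdj packingBlocks (leaveVertexEquiv x) (leaveVertexEquiv x.next) := by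
  have h_ne : ∀ x, leaveVertexEquiv x ≠ leaveVertexEquiv x.next := by decide +kernel
  have h_uncovered : ∀ x, ∀ l ∈ blockList,
      ¬ (leaveVertexEquiv x ∈ l ∧ leaveVertexEquiv x.next ∈ l) := by decide +kernel
  refine ⟨h_ne x, fun b hb => ?_⟩
  obtain ⟨l, hl, rfl⟩ := mem_packingBlocks.mp hb
  simpa only [List.mem_toFinset] using h_uncovered x l hl

/-- There is a 2-(24,4,1) packing with 42 blocks whose leave is a vertex-disjoint
union of cycles of lengths [3, 3, 3, 3, 3, 4, 5], covering all 24 points. -/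
theorem exists_max_packing_with_leave_type :
    ∃ B : Finset (Finset (Fin 24)), IsPacking B ∧ B.card = 42 ∧
      LeaveIsCycleType B [3, 3, 3, 3, 3, 4, 5] :=
  ⟨packingBlocks, isPacking_packingBlocks, card_packingBlocks,
    leaveIsCycleType_of_equiv isPacking_packingBlocks card_packingBlocks (by decide)
      leaveVertexEquiv leaveAdj_packingBlocks_next⟩
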